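/- Let ũ, μ ∈ ℝ and 0 < ξ < σ, and set σ' = √(σ² − ξ²). Then ∫_ℝ Φ((ũ − m)/σ') · Φ((m − ũ)/σ') · (1/ξ) φ((m − μ)/ξ) dm = 2 T( (ũ − μ)/σ , √((σ² − ξ²)/(σ² + ξ²)) ); that is, the expectation of Φ(z)Φ(−z) with z = (ũ − m)/σ' and m normally distributed with mean μ and variance ξ² equals twice an Owen's T function value. -/

import Mathlib

open MeasureTheory

/-- The standard normal cumulative distribution function. -/
noncomputable def Phi (x : ℝ) : ℝ :=
  ∫ t in Set.Iic x, Real.exp (-t^2/2) / Real.sqrt (2 * Real.pi)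

/-- The standard normal density. -/
noncomputable def phiPdf (x : ℝ) : ℝ :=
  Real.exp (-x^2/2) / Real.sqrt (2 * Real.pi)

/-- Owen's T function. -/
noncomputable def owenT (h a : ℝ) : ℝ :=
  (1 / (2 * Real.pi)) * ∫ x in (0:ℝ)..a, Real.exp (-h^2 * (1 + x^2) / 2) / (1 + x^2)

open ProbabilityTheory Real Set
open scoped NNReal

/-!
The functions `h ↦ Φ(h) Φ(-h)` and `h ↦ 2 T(h, 1)` have the same derivative and agree at `h = 0`,
so the integrand is a value of Owen's function. For `Z ∼ N(ν, v)` and fixed `x`, completing the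
square evaluates the Gaussian average of the integrand of `T(Z, a)`, and the substitution
`t = x / √(1 + v (1 + x²))` turns what remains into
`E T(Z, a) = T(ν / √(1 + v), a / √(1 + v (1 + a²)))`. The theorem is the case `a = 1`, with
`Z = (ũ - m) / σ'`, hence `ν = (ũ - μ) / σ'` and `v = ξ² / σ'²`.
-/

theorem hasDerivAt_intervalIntegral_of_continuous_deriv {E : Type*} [NormedAddCommGroup E]
    [NormedSpace ℝ E] {f f' : ℝ → ℝ → E} {a b : ℝ} (hf : ∀ y, Continuous (f y))
    (hf' : Continuous (Function.uncurry f')) (hd : ∀ y t, HasDerivAt (f · t) (f' y t) y) (x : ℝ) :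
    HasDerivAt (fun y ↦ ∫ t in a..b, f y t) (∫ t in a..b, f' x t) x := by
  obtain ⟨C, hC⟩ := ((isCompact_closedBall x 1).prod
    (isCompact_uIcc (a := a) (b := b))).exists_bound_of_continuousOn hf'.continuousOn
  refine (intervalIntegral.hasDerivAt_integral_of_dominated_loc_of_deriv_le (μ := volume)
    (bound := fun _ ↦ C) (Metric.closedBall_mem_nhds x one_pos)
    (.of_forall fun y ↦ (hf y).aestronglyMeasurable) ((hf x).intervalIntegrable a b)
    (by fun_prop) ?_ intervalIntegrable_const (.of_forall fun t _ y _ ↦ hd y t)).2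
  exact .of_forall fun t ht y hy ↦ hC (y, t) ⟨hy, uIoc_subset_uIcc ht⟩

theorem gaussianPDFReal_eq_phiPdf {s : ℝ} (hs : 0 < s) (μ x : ℝ) :
    gaussianPDFReal μ (.mk (s ^ 2) (sq_nonneg s)) x = 1 / s * phiPdf ((x - μ) / s) := by
  have hsqrt : √(2 * π * s ^ 2) = √(2 * π) * s := by
    rw [sqrt_mul (by positivity), sqrt_sq hs.le]
  rw [gaussianPDFReal_def, phiPdf, NNReal.coe_mk, hsqrt]
  field_simp

theorem phiPdf_eq_gaussianPDFReal : phiPdf = gaussianPDFReal 0 1 := by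
  ext x
  simp [phiPdf, gaussianPDFReal, div_eq_inv_mul]

theorem continuous_phiPdf : Continuous phiPdf := by
  unfold phiPdf
  fun_prop

theorem integrable_phiPdf : Integrable phiPdf :=
  phiPdf_eq_gaussianPDFReal ▸ integrable_gaussianPDFReal 0 1

theorem integral_phiPdf : ∫ x, phiPdf x = 1 :=
  phiPdf_eq_gaussianPDFReal ▸ integral_gaussianPDFReal_eq_one 0 one_ne_zero

theorem phiPdf_neg (x : ℝ) : phiPdf (-x) = phiPdf x := by
  simp only [phiPdf, neg_sq]

theorem Phi_sub_Phi (a b : ℝ) : Phi b - Phi a = ∫ t in a..b, phiPdf t :=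
  intervalIntegral.integral_Iic_sub_Iic integrable_phiPdf.integrableOn
    integrable_phiPdf.integrableOn

theorem Phi_neg (x : ℝ) : Phi (-x) = 1 - Phi x := by
  have htail : Phi (-x) = ∫ t in Ioi x, phiPdf t := by
    rw [← neg_neg x, ← integral_comp_neg_Iic, neg_neg]
    simp only [phiPdf_neg]
    rfl
  rw [htail, eq_sub_iff_add_eq', ← integral_phiPdf]
  exact intervalIntegral.integral_Iic_add_Ioi integrable_phiPdf.integrableOn
    integrable_phiPdf.integrableOn

theorem Phi_zero : Phi 0 = 1 / 2 := by
  have h := Phi_neg 0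
  rw [neg_zero] at h
  linarith

theorem hasDerivAt_Phi (x : ℝ) : HasDerivAt Phi (phiPdf x) x := by
  have hPhi : Phi = fun y ↦ (∫ t in (0 : ℝ)..y, phiPdf t) + Phi 0 := by
    ext y
    rw [← Phi_sub_Phi, sub_add_cancel]
  rw [hPhi]
  exact (continuous_phiPdf.integral_hasStrictDerivAt 0 x).hasDerivAt.add_const _

theorem continuous_Phi : Continuous Phi :=
  continuous_iff_continuousAt.2 fun x ↦ (hasDerivAt_Phi x).continuousAt

/-- The integrand of Owen's T function, without the factor `1 / (2π)`: differentiation in `h`,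
Gaussian averaging in `h` and the substitution in `x` are all carried out on it. -/
noncomputable def owenKernel (h x : ℝ) : ℝ :=
  exp (-h ^ 2 * (1 + x ^ 2) / 2) / (1 + x ^ 2)

theorem owenT_eq_integral_owenKernel (h a : ℝ) :
    owenT h a = 1 / (2 * π) * ∫ x in (0 : ℝ)..a, owenKernel h x :=
  rfl

theorem continuous_uncurry_owenKernel : Continuous (Function.uncurry owenKernel) := by
  unfold owenKernel Function.uncurry
  exact .div (by fun_prop) (by fun_prop) fun _ ↦ by positivity

theorem continuous_owenKernel (h : ℝ) : Continuous (owenKernel h) :=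
  continuous_uncurry_owenKernel.comp (.prodMk_right h)

theorem norm_owenKernel_le_one (h x : ℝ) : ‖owenKernel h x‖ ≤ 1 := by
  rw [owenKernel, norm_of_nonneg (by positivity), div_le_one (by positivity)]
  have hexp : exp (-h ^ 2 * (1 + x ^ 2) / 2) ≤ 1 := by
    rw [exp_le_one_iff]
    linarith [show 0 ≤ h ^ 2 * (1 + x ^ 2) by positivity]
  linarith [sq_nonneg x]

theorem hasDerivAt_owenKernel_left (h x : ℝ) :
    HasDerivAt (owenKernel · x) (-(2 * π * phiPdf h * (h * phiPdf (h * x)))) h := by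
  have hexponent : HasDerivAt (fun y : ℝ ↦ -y ^ 2 * (1 + x ^ 2) / 2) (-h * (1 + x ^ 2)) h := by
    refine (((hasDerivAt_pow 2 h).neg.mul_const (1 + x ^ 2)).div_const 2).congr_deriv ?_
    norm_num
    ring
  refine (hexponent.exp.div_const (1 + x ^ 2)).congr_deriv ?_
  have hsplit : -h ^ 2 * (1 + x ^ 2) / 2 = -h ^ 2 / 2 + -(h * x) ^ 2 / 2 := by ring
  rw [phiPdf, phiPdf, hsplit, exp_add]
  field_simp
  rw [sq_sqrt (by positivity)]
  ring

theorem hasDerivAt_owenT_left (h a : ℝ) :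
    HasDerivAt (owenT · a) (-(phiPdf h * (Phi (h * a) - 1 / 2))) h := by
  have hcont : Continuous
      (Function.uncurry fun h x ↦ -(2 * π * phiPdf h * (h * phiPdf (h * x)))) := by
    have := continuous_phiPdf
    unfold Function.uncurry
    fun_prop
  refine ((hasDerivAt_intervalIntegral_of_continuous_deriv continuous_owenKernel hcont
    hasDerivAt_owenKernel_left h).const_mul (1 / (2 * π))).congr_deriv ?_
  rw [intervalIntegral.integral_neg, intervalIntegral.integral_const_mul,
    intervalIntegral.integral_const_mul, intervalIntegral.mul_integral_comp_mul_left, mul_zero,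
    ← Phi_sub_Phi, Phi_zero]
  field_simp

theorem owenT_zero_left (a : ℝ) : owenT 0 a = arctan a / (2 * π) := by
  simp [owenT, div_eq_inv_mul]

theorem Phi_mul_Phi_neg (h : ℝ) : Phi h * Phi (-h) = 2 * owenT h 1 := by
  have hderiv (y : ℝ) : HasDerivAt (fun y ↦ Phi y * (1 - Phi y) - 2 * owenT y 1) 0 y := by
    refine (((hasDerivAt_Phi y).mul ((hasDerivAt_Phi y).const_sub 1)).sub
      ((hasDerivAt_owenT_left y 1).const_mul 2)).congr_deriv ?_
    rw [mul_one]
    ring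
  have hconst := is_const_of_deriv_eq_zero (fun y ↦ (hderiv y).differentiableAt)
    (fun y ↦ (hderiv y).deriv) h 0
  have hzero : Phi 0 * (1 - Phi 0) - 2 * owenT 0 1 = 0 := by
    rw [Phi_zero, owenT_zero_left, arctan_one]
    field_simp
    norm_num
  rw [Phi_neg, ← sub_eq_zero, hconst, hzero]

theorem gaussianPDFReal_mul_exp_neg_sq (ν : ℝ) {v : ℝ≥0} (hv : v ≠ 0) (t : ℝ≥0) (z : ℝ) :
    gaussianPDFReal ν v z * exp (-z ^ 2 * t / 2) =
      exp (-ν ^ 2 * t / (1 + v * t) / 2) / √(1 + v * t) *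
        gaussianPDFReal (ν / (1 + v * t)) (v / (1 + v * t)) z := by
  have : (0 : ℝ) < v := by positivity
  have hsqrt : √(2 * π * v) = √(1 + v * t) * √(2 * π * (v / (1 + v * t))) := by
    rw [← sqrt_mul (by positivity)]
    congr 1
    field_simp
  have hexponent : -(z - ν) ^ 2 / (2 * v) + -z ^ 2 * t / 2 = -ν ^ 2 * t / (1 + v * t) / 2 +
      -(z - ν / (1 + v * t)) ^ 2 / (2 * (v / (1 + v * t))) := by
    field_simp
    ring
  simp only [gaussianPDFReal, NNReal.coe_div, NNReal.coe_add, NNReal.coe_one, NNReal.coe_mul]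
  rw [hsqrt, mul_assoc, ← exp_add, hexponent, exp_add]
  field_simp

theorem integral_exp_neg_sq_mul_gaussianReal (ν : ℝ) (v : ℝ≥0) {t : ℝ} (ht : 0 ≤ t) :
    ∫ z, exp (-z ^ 2 * t / 2) ∂gaussianReal ν v =
      exp (-ν ^ 2 * t / (1 + v * t) / 2) / √(1 + v * t) := by
  lift t to ℝ≥0 using ht
  obtain rfl | hv := eq_or_ne v 0
  · simp
  have hw : v / (1 + v * t) ≠ 0 := by positivity
  rw [integral_gaussianReal_eq_integral_smul hv]
  simp only [smul_eq_mul, gaussianPDFReal_mul_exp_neg_sq ν hv, integral_const_mul,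
    integral_gaussianPDFReal_eq_one _ hw, mul_one]

theorem integral_owenKernel_gaussianReal (ν x : ℝ) (v : ℝ≥0) :
    ∫ z, owenKernel z x ∂gaussianReal ν v =
      exp (-ν ^ 2 * (1 + x ^ 2) / (1 + v * (1 + x ^ 2)) / 2) / √(1 + v * (1 + x ^ 2)) /
        (1 + x ^ 2) := by
  simp only [owenKernel]
  rw [integral_div, integral_exp_neg_sq_mul_gaussianReal ν v (by positivity)]

theorem one_add_div_sqrt_sq {v x : ℝ} (hpos : 0 < 1 + v * (1 + x ^ 2)) :
    1 + (x / √(1 + v * (1 + x ^ 2))) ^ 2 = (1 + v) * (1 + x ^ 2) / (1 + v * (1 + x ^ 2)) := by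
  rw [div_pow, sq_sqrt hpos.le]
  field_simp
  ring

theorem hasDerivAt_div_sqrt_one_add {v x : ℝ} (hpos : 0 < 1 + v * (1 + x ^ 2)) :
    HasDerivAt (fun x : ℝ ↦ x / √(1 + v * (1 + x ^ 2)))
      ((1 + v) / √(1 + v * (1 + x ^ 2)) ^ 3) x := by
  have hinner : HasDerivAt (fun x : ℝ ↦ 1 + v * (1 + x ^ 2)) (v * (2 * x)) x := by
    simpa using (((hasDerivAt_pow 2 x).const_add 1).const_mul v).const_add 1
  refine ((hasDerivAt_id x).div (hinner.sqrt hpos.ne') (sqrt_ne_zero'.2 hpos)).congr_deriv ?_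
  rw [id]
  field_simp
  rw [sq_sqrt hpos.le]
  ring

theorem owenKernel_div_sqrt_mul_deriv (ν x : ℝ) (v : ℝ≥0) :
    owenKernel (ν / √(1 + v)) (x / √(1 + v * (1 + x ^ 2))) *
        ((1 + v) / √(1 + v * (1 + x ^ 2)) ^ 3) =
      ∫ z, owenKernel z x ∂gaussianReal ν v := by
  have hexponent : -(ν / √(1 + v)) ^ 2 * ((1 + v) * (1 + x ^ 2) / (1 + v * (1 + x ^ 2))) / 2 =
      -ν ^ 2 * (1 + x ^ 2) / (1 + v * (1 + x ^ 2)) / 2 := by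
    rw [div_pow, sq_sqrt (by positivity)]
    field_simp
  have hcube : √(1 + v * (1 + x ^ 2)) ^ 3 =
      (1 + v * (1 + x ^ 2)) * √(1 + v * (1 + x ^ 2)) := by
    rw [pow_succ, sq_sqrt (by positivity)]
  rw [integral_owenKernel_gaussianReal, owenKernel, one_add_div_sqrt_sq (by positivity),
    hexponent, hcube]
  field_simp

theorem integral_integral_owenKernel_gaussianReal (ν a : ℝ) (v : ℝ≥0) :
    ∫ x in (0 : ℝ)..a, ∫ z, owenKernel z x ∂gaussianReal ν v =
      ∫ t in (0 : ℝ)..a / √(1 + v * (1 + a ^ 2)), owenKernel (ν / √(1 + v)) t := by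
  have hcont : Continuous fun x : ℝ ↦ (1 + v) / √(1 + v * (1 + x ^ 2)) ^ 3 :=
    .div (by fun_prop) (by fun_prop) fun _ ↦ by positivity
  have hsubst := intervalIntegral.integral_comp_mul_deriv (a := 0) (b := a)
    (fun x _ ↦ hasDerivAt_div_sqrt_one_add (v := v) (by positivity)) hcont.continuousOn
    (continuous_owenKernel (ν / √(1 + v)))
  simpa only [Function.comp_apply, owenKernel_div_sqrt_mul_deriv, zero_div] using hsubst

theorem integral_owenT_gaussianReal (ν a : ℝ) (v : ℝ≥0) :
    ∫ z, owenT z a ∂gaussianReal ν v =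
      owenT (ν / √(1 + v)) (a / √(1 + v * (1 + a ^ 2))) := by
  have : IsFiniteMeasure (volume.restrict (uIoc 0 a)) := isFiniteMeasure_restrict_Ioc _ _
  have hint : Integrable (Function.uncurry fun x z ↦ owenKernel z x)
      ((volume.restrict (uIoc 0 a)).prod (gaussianReal ν v)) :=
    .of_bound (continuous_uncurry_owenKernel.comp continuous_swap).aestronglyMeasurable 1
      (.of_forall fun p ↦ norm_owenKernel_le_one p.2 p.1)
  simp only [owenT_eq_integral_owenKernel]
  rw [integral_const_mul, ← intervalIntegral_integral_swap hint,
    integral_integral_owenKernel_gaussianReal]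

theorem integral_Phi_mul_Phi_neg_gaussianReal (ν : ℝ) (v : ℝ≥0) :
    ∫ z, Phi z * Phi (-z) ∂gaussianReal ν v = 2 * owenT (ν / √(1 + v)) (1 / √(1 + 2 * v)) := by
  simp only [Phi_mul_Phi_neg]
  rw [integral_const_mul, integral_owenT_gaussianReal]
  congr 4
  ring

theorem gaussianReal_map_const_sub_div (c s μ : ℝ) (v : ℝ≥0) :
    (gaussianReal μ v).map (fun x ↦ (c - x) / s) =
      gaussianReal ((c - μ) / s) (v / (.mk (s ^ 2) (sq_nonneg s))) := by
  rw [← gaussianReal_map_div_const, ← gaussianReal_map_const_sub,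
    Measure.map_map (by fun_prop) (by fun_prop)]
  rfl

theorem integral_Phi_mul_Phi_neg_const_sub_div_gaussianReal {s : ℝ} (hs : 0 < s) (u μ : ℝ)
    (v : ℝ≥0) :
    ∫ m, Phi ((u - m) / s) * Phi (-((u - m) / s)) ∂gaussianReal μ v =
      2 * owenT ((u - μ) / √(s ^ 2 + v)) (s / √(s ^ 2 + 2 * v)) := by
  have hcont : Continuous fun z ↦ Phi z * Phi (-z) :=
    continuous_Phi.mul (continuous_Phi.comp continuous_neg)
  have hscale (w : ℝ) : √(s ^ 2 + w) = s * √(1 + w / s ^ 2) := by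
    rw [← sqrt_sq hs.le, ← sqrt_mul (by positivity), sqrt_sq hs.le]
    congr 1
    field_simp
  rw [← integral_map (φ := fun m ↦ (u - m) / s) (by fun_prop) hcont.aestronglyMeasurable,
    gaussianReal_map_const_sub_div, integral_Phi_mul_Phi_neg_gaussianReal, hscale, hscale,
    NNReal.coe_div, NNReal.coe_mk, div_div, div_mul_cancel_left₀ hs.ne', mul_div_assoc, one_div]

theorem integral_mul_phiPdf {s : ℝ} (hs : 0 < s) (μ : ℝ) (f : ℝ → ℝ) :
    ∫ x, f x * (1 / s * phiPdf ((x - μ) / s)) =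
      ∫ x, f x ∂gaussianReal μ (.mk (s ^ 2) (sq_nonneg s)) := by
  have hvar : NNReal.mk (s ^ 2) (sq_nonneg s) ≠ 0 := NNReal.coe_ne_zero.1 (pow_pos hs 2).ne'
  simp only [integral_gaussianReal_eq_integral_smul hvar, smul_eq_mul, gaussianPDFReal_eq_phiPdf hs,
    mul_comm]

/-- The expectation of the Bernoulli variance `Φ(z)Φ(−z)` with `z = (ũ − m)/σ'`,
`σ' = √(σ² − ξ²)`, and `m ∼ N(μ, ξ²)` equals
`2 T((ũ − μ)/σ, √((σ² − ξ²)/(σ² + ξ²)))`. -/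
theorem expected_variance_owenT (utld μ ξ σ : ℝ) (hξ : 0 < ξ) (hξσ : ξ < σ) :
    (∫ m : ℝ, Phi ((utld - m) / Real.sqrt (σ^2 - ξ^2))
        * Phi ((m - utld) / Real.sqrt (σ^2 - ξ^2))
        * ((1/ξ) * phiPdf ((m - μ)/ξ)))
      = 2 * owenT ((utld - μ)/σ) (Real.sqrt ((σ^2 - ξ^2) / (σ^2 + ξ^2))) := by
  have hσ : 0 < σ := hξ.trans hξσ
  have hvar : 0 < σ ^ 2 - ξ ^ 2 := sub_pos.2 (pow_lt_pow_left₀ hξσ hξ.le two_ne_zero)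
  have hneg (m : ℝ) : (m - utld) / √(σ ^ 2 - ξ ^ 2) = -((utld - m) / √(σ ^ 2 - ξ ^ 2)) := by
    rw [← neg_div, neg_sub]
  have hadd : σ ^ 2 - ξ ^ 2 + 2 * ξ ^ 2 = σ ^ 2 + ξ ^ 2 := by ring
  simp only [hneg]
  rw [integral_mul_phiPdf hξ μ fun m ↦ Phi ((utld - m) / √(σ ^ 2 - ξ ^ 2)) *
      Phi (-((utld - m) / √(σ ^ 2 - ξ ^ 2))),
    integral_Phi_mul_Phi_neg_const_sub_div_gaussianReal (sqrt_pos.2 hvar), NNReal.coe_mk,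
    sq_sqrt hvar.le, sub_add_cancel, sqrt_sq hσ.le, hadd, sqrt_div hvar.le]
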